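/- arXiv:1401.4564 — 2 statements merged into one kernel-verified Lean document; each statement's English description precedes it below -/
import Mathlib

section
/- The zero set of Θ_q in ℂ* is exactly the discrete q-spiral −q^ℤ := {−q^n : n ∈ ℤ}, and every zero is simple: Θ_q(z) = 0 if and only if z ∈ −q^ℤ, and Θ_q′(−q^n) ≠ 0 for every n ∈ ℤ. -/
/-- The Jacobi theta function `Θ_q(z) = ∑_{ℓ ∈ ℤ} q^{-ℓ(ℓ+1)/2} z^ℓ`. -/
noncomputable def theta (q z : ℂ) : ℂ := ∑' ℓ : ℤ, q ^ (-(ℓ * (ℓ + 1) / 2)) * z ^ ℓ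

/-!
The zeros are read off Jacobi's triple product: with `p = q⁻¹`,
`Θ_q(z) = (p; p)_∞ (-p z; p)_∞ (-z⁻¹; p)_∞`. Substituting `p^{-N} z` into the `q`-binomial theorem
for `(-p z; p)_{M + N}` gives a finite form of this identity, whose coefficients `[M + N, N + l]_p`
are uniformly bounded and tend to `1 / (p; p)_∞`, so that dominated convergence yields the infinite
one. The factor `1 + z⁻¹` of `(-z⁻¹; p)_∞` makes the zero at `-1` simple, with
`Θ_q'(-1) = -(p; p)_∞³`, and the quasi-periodicity of `Θ_q` carries this to every `-q^n`.
-/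

open Filter Topology Finset

lemma hasDerivAt_sub_mul_of_continuousAt {𝕜 : Type*} [NontriviallyNormedField 𝕜] {g : 𝕜 → 𝕜}
    {a : 𝕜} (hg : ContinuousAt g a) : HasDerivAt (fun x ↦ (x - a) * g x) (g a) a := by
  refine hasDerivAt_iff_tendsto_slope.mpr ((hg.mono_left nhdsWithin_le_nhds).congr' ?_)
  filter_upwards [self_mem_nhdsWithin] with x hx
  rw [slope_def_field, sub_self, zero_mul, sub_zero, mul_div_cancel_left₀ _ (sub_ne_zero.mpr hx)]

section QPochhammer

variable {R : Type*} [CommRing R]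

/-- The finite `q`-Pochhammer symbol `(a; p)_n`. -/
def qPochhammer (a p : R) (n : ℕ) : R := ∏ i ∈ range n, (1 - a * p ^ i)

lemma qPochhammer_zero (a p : R) : qPochhammer a p 0 = 1 := prod_range_zero _

lemma qPochhammer_succ (a p : R) (n : ℕ) :
    qPochhammer a p (n + 1) = qPochhammer a p n * (1 - a * p ^ n) :=
  prod_range_succ _ n

lemma qPochhammer_succ' (a p : R) (n : ℕ) :
    qPochhammer a p (n + 1) = (1 - a) * qPochhammer (a * p) p n := by
  simp only [qPochhammer, prod_range_succ', pow_zero, mul_one, pow_succ', mul_assoc]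
  exact mul_comm _ _

end QPochhammer

section QBinom

variable {K : Type*} [Field K]

/-- The Gaussian binomial coefficient `[n, k]_p`, defined by its Pascal recursion. The lower index
is an integer, the value being `0` outside `0 ≤ k ≤ n`, so that bilateral sums can be shifted
freely. -/
def qBinom (p : K) : ℕ → ℤ → K
  | 0, k => if k = 0 then 1 else 0
  | n + 1, k => qBinom p n (k - 1) + p ^ k * qBinom p n k

lemma qBinom_of_neg (p : K) (n : ℕ) {k : ℤ} (hk : k < 0) : qBinom p n k = 0 := by
  induction n generalizing k with
  | zero => exact if_neg hk.ne
  | succ n ih => rw [qBinom, ih hk, ih (by lia), mul_zero, add_zero]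

lemma qBinom_of_lt (p : K) {n : ℕ} {k : ℤ} (hk : n < k) : qBinom p n k = 0 := by
  induction n generalizing k with
  | zero => exact if_neg (by lia)
  | succ n ih => rw [qBinom, ih (by lia), ih (by lia), mul_zero, add_zero]

lemma qBinom_zero_right (p : K) (n : ℕ) : qBinom p n 0 = 1 := by
  induction n with
  | zero => exact if_pos rfl
  | succ n ih => rw [qBinom, ih, qBinom_of_neg p n (by lia), zpow_zero, mul_one, zero_add]

lemma qBinom_self (p : K) (n : ℕ) : qBinom p n n = 1 := by
  induction n with
  | zero => exact if_pos rfl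
  | succ n ih =>
    rw [qBinom, qBinom_of_lt p (n := n) (k := (n + 1 : ℕ)) (by lia), mul_zero, add_zero,
      Nat.cast_succ, add_sub_cancel_right, ih]

lemma qBinom_mul_qPochhammer_mul_qPochhammer (p : K) (a b : ℕ) :
    qBinom p (a + b) a * qPochhammer p p a * qPochhammer p p b = qPochhammer p p (a + b) := by
  induction a generalizing b with
  | zero => simp [qBinom_zero_right, qPochhammer_zero]
  | succ a iha =>
    induction b with
    | zero => rw [add_zero, qBinom_self, qPochhammer_zero, one_mul, mul_one]
    | succ b ihb =>
      have pascal : qBinom p (a + 1 + (b + 1)) (a + 1 : ℕ) =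
          qBinom p (a + (b + 1)) a + p ^ (a + 1) * qBinom p (a + 1 + b) (a + 1 : ℕ) := by
        rw [← add_assoc, qBinom, zpow_natCast, Nat.cast_succ, add_sub_cancel_right,
          add_right_comm a 1 b, add_assoc a b 1]
      have left := iha (b + 1)
      rw [show a + (b + 1) = a + 1 + b by ring] at left pascal
      rw [pascal, ← add_assoc (a + 1) b 1, qPochhammer_succ p p (a + 1 + b)]
      rw [qPochhammer_succ p p b] at left ⊢
      rw [qPochhammer_succ p p a] at ihb ⊢
      linear_combination (1 - p * p ^ a) * left + p ^ (a + 1) * (1 - p * p ^ b) * ihb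

end QBinom

section ThetaTerm

variable {K : Type*} [Field K]

/-- The general term `p^{l(l+1)/2} z^l` of the theta series, in terms of the nome `p = q⁻¹`. -/
def thetaTerm (p z : K) (l : ℤ) : K := p ^ (l * (l + 1) / 2) * z ^ l

lemma triangular_add (l n : ℤ) :
    (l + n) * (l + n + 1) / 2 = l * (l + 1) / 2 + n * (n + 1) / 2 + l * n := by
  have hl := Int.ediv_mul_cancel (Int.even_mul_succ_self l).two_dvd
  have hn := Int.ediv_mul_cancel (Int.even_mul_succ_self n).two_dvd
  refine Int.ediv_eq_of_eq_mul_left two_ne_zero ?_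
  linear_combination -hl - hn

lemma thetaTerm_zero (p z : K) : thetaTerm p z 0 = 1 := by simp [thetaTerm]

lemma thetaTerm_one (p z : K) : thetaTerm p z 1 = p * z := by simp [thetaTerm]

lemma thetaTerm_ne_zero {p z : K} (hp : p ≠ 0) (hz : z ≠ 0) (l : ℤ) : thetaTerm p z l ≠ 0 :=
  mul_ne_zero (zpow_ne_zero _ hp) (zpow_ne_zero _ hz)

lemma thetaTerm_mul_right (p c z : K) (l : ℤ) :
    thetaTerm p (c * z) l = c ^ l * thetaTerm p z l := by
  rw [thetaTerm, thetaTerm, mul_zpow, mul_left_comm]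

lemma thetaTerm_add {p z : K} (hp : p ≠ 0) (hz : z ≠ 0) (l n : ℤ) :
    thetaTerm p z (l + n) = p ^ (l * n) * thetaTerm p z l * thetaTerm p z n := by
  simp only [thetaTerm, triangular_add, zpow_add₀ hp, zpow_add₀ hz]
  ring

lemma thetaTerm_add_one {p z : K} (hp : p ≠ 0) (hz : z ≠ 0) (l : ℤ) :
    thetaTerm p z (l + 1) = p ^ (l + 1) * z * thetaTerm p z l := by
  rw [thetaTerm_add hp hz, thetaTerm_one, mul_one, zpow_add_one₀ hp]
  ring

lemma thetaTerm_neg_add_one (p : K) {z : K} (hz : z ≠ 0) (l : ℤ) :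
    thetaTerm p z (-(l + 1)) = z⁻¹ * thetaTerm p z⁻¹ l := by
  rw [thetaTerm, thetaTerm, show -(l + 1) * (-(l + 1) + 1) = l * (l + 1) by ring, zpow_neg,
    zpow_add_one₀ hz, mul_inv, inv_zpow]
  ring

lemma thetaTerm_zpow_neg_mul_add {p z : K} (hp : p ≠ 0) (hz : z ≠ 0) (l n : ℤ) :
    thetaTerm p (p ^ (-n) * z) (l + n) = thetaTerm p (p ^ (-n) * z) n * thetaTerm p z l := by
  rw [thetaTerm_add hp (mul_ne_zero (zpow_ne_zero _ hp) hz), thetaTerm_mul_right p _ z l,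
    ← zpow_mul, neg_mul, zpow_neg, mul_comm n l, mul_inv_cancel_left₀ (zpow_ne_zero _ hp),
    mul_comm]

end ThetaTerm

section FiniteTripleProduct

variable {K : Type*} [Field K]

lemma qPochhammer_zpow_neg_mul {p z : K} (hp : p ≠ 0) (hz : z ≠ 0) (M N : ℕ) :
    qPochhammer (-(p * (p ^ (-(N : ℤ)) * z))) p (M + N) =
      thetaTerm p (p ^ (-(N : ℤ)) * z) N *
        (qPochhammer (-(p * z)) p M * qPochhammer (-z⁻¹) p N) := by
  induction N with
  | zero => simp [thetaTerm_zero, qPochhammer_zero]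
  | succ N ih =>
    have shift : p * (p ^ (-((N + 1 : ℕ) : ℤ)) * z) = p ^ (-(N : ℤ)) * z := by
      rw [Nat.cast_succ, neg_add, zpow_add₀ hp, zpow_neg_one]
      field_simp
    have term : thetaTerm p (p ^ (-((N + 1 : ℕ) : ℤ)) * z) (N + 1 : ℕ) =
        (p ^ N)⁻¹ * z * thetaTerm p (p ^ (-(N : ℤ)) * z) N := by
      rw [← shift, thetaTerm_mul_right p p, Nat.cast_succ,
        thetaTerm_add_one hp (mul_ne_zero (zpow_ne_zero _ hp) hz), zpow_add_one₀ hp,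
        mul_assoc _ p, ← Nat.cast_succ, shift, zpow_neg, zpow_natCast]
      ring
    rw [← add_assoc, qPochhammer_succ', shift, neg_mul, mul_comm _ p, ih, qPochhammer_succ, term,
      zpow_neg, zpow_natCast]
    field_simp
    ring

variable [TopologicalSpace K] [IsTopologicalRing K]

lemma q_binomial_theorem {p x : K} (hp : p ≠ 0) (hx : x ≠ 0) (n : ℕ) :
    HasSum (fun k ↦ qBinom p n k * thetaTerm p x k) (qPochhammer (-(p * x)) p n) := by
  induction n generalizing x with
  | zero =>
    convert hasSum_single (0 : ℤ) fun k hk ↦ ?_ using 1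
    · simp [qBinom_zero_right, thetaTerm_zero, qPochhammer_zero]
    · rw [qBinom, if_neg hk, zero_mul]
  | succ n ih =>
    have main := ih (mul_ne_zero hp hx)
    have shifted := ((Equiv.subRight (1 : ℤ)).hasSum_iff.mpr main).mul_left (p * x)
    rw [qPochhammer_succ', neg_mul, mul_right_comm, mul_assoc p, sub_neg_eq_add, one_add_mul]
    refine (main.add shifted).congr_fun fun k ↦ ?_
    have term : thetaTerm p x k = p * x * thetaTerm p (p * x) (k - 1) := by
      conv_lhs => rw [← sub_add_cancel k 1, thetaTerm_add_one hp hx, zpow_add_one₀ hp]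
      rw [thetaTerm_mul_right]
      ring
    rw [qBinom, add_mul, Function.comp_apply, Equiv.subRight_apply, thetaTerm_mul_right p p x k]
    linear_combination qBinom p n (k - 1) * term

lemma finite_jacobi_triple_product {p z : K} (hp : p ≠ 0) (hz : z ≠ 0) (M N : ℕ) :
    HasSum (fun l : ℤ ↦ qBinom p (M + N) (l + N) * thetaTerm p z l)
      (qPochhammer (-(p * z)) p M * qPochhammer (-z⁻¹) p N) := by
  have hw : p ^ (-(N : ℤ)) * z ≠ 0 := mul_ne_zero (zpow_ne_zero _ hp) hz
  rw [← hasSum_mul_left_iff (thetaTerm_ne_zero hp hw N), ← qPochhammer_zpow_neg_mul hp hz]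
  refine ((Equiv.addRight (N : ℤ)).hasSum_iff.mpr
    (q_binomial_theorem hp hw (M + N))).congr_fun fun l ↦ ?_
  rw [Function.comp_apply, Equiv.coe_addRight, thetaTerm_zpow_neg_mul_add hp hz, mul_left_comm]

end FiniteTripleProduct

section Summability

variable {𝕜 : Type*} [NormedField 𝕜] {p z : 𝕜}

lemma summable_norm_thetaTerm_natCast (hp : ‖p‖ < 1) (hp0 : p ≠ 0) (hz : z ≠ 0) :
    Summable fun n : ℕ ↦ ‖thetaTerm p z n‖ := by
  have hne (n : ℕ) : ‖thetaTerm p z n‖ ≠ 0 := norm_ne_zero_iff.mpr (thetaTerm_ne_zero hp0 hz n)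
  refine summable_of_ratio_test_tendsto_lt_one zero_lt_one (.of_forall hne) ?_
  have ratio (n : ℕ) : ‖p‖ ^ (n + 1) * ‖z‖ =
      ‖‖thetaTerm p z (n + 1 : ℕ)‖‖ / ‖‖thetaTerm p z n‖‖ := by
    rw [norm_norm, norm_norm, eq_div_iff (hne n), Nat.cast_succ, thetaTerm_add_one hp0 hz,
      norm_mul, norm_mul, norm_zpow, ← Nat.cast_succ, zpow_natCast]
  refine Tendsto.congr ratio ?_
  simpa only [zero_mul] using ((tendsto_add_atTop_iff_nat 1).mpr
    (tendsto_pow_atTop_nhds_zero_of_lt_one (norm_nonneg p) hp)).mul_const ‖z‖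

lemma summable_norm_thetaTerm (hp : ‖p‖ < 1) (hp0 : p ≠ 0) (hz : z ≠ 0) :
    Summable fun l : ℤ ↦ ‖thetaTerm p z l‖ := by
  refine .of_nat_of_neg_add_one (summable_norm_thetaTerm_natCast hp hp0 hz) ?_
  simpa only [thetaTerm_neg_add_one p hz, norm_mul] using
    (summable_norm_thetaTerm_natCast hp hp0 (inv_ne_zero hz)).mul_left ‖z⁻¹‖

end Summability

section QPochhammerInf

/-- The infinite `q`-Pochhammer symbol `(a; p)_∞`. -/
noncomputable def qPochhammerInf {R : Type*} [CommRing R] [TopologicalSpace R] (a p : R) : R :=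
  ∏' n : ℕ, (1 - a * p ^ n)

variable {𝕜 : Type*} [NormedField 𝕜] {p : 𝕜}

lemma summable_norm_neg_mul_pow (hp : ‖p‖ < 1) (a : 𝕜) :
    Summable fun n : ℕ ↦ ‖-(a * p ^ n)‖ := by
  simpa only [norm_neg, norm_mul, norm_pow] using
    (summable_geometric_of_lt_one (norm_nonneg p) hp).mul_left ‖a‖

variable [CompleteSpace 𝕜]

lemma multipliable_one_sub_mul_pow (hp : ‖p‖ < 1) (a : 𝕜) :
    Multipliable fun n : ℕ ↦ 1 - a * p ^ n := by
  simpa only [sub_eq_add_neg] using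
    multipliable_one_add_of_summable (summable_norm_neg_mul_pow hp a)

lemma tendsto_qPochhammer (hp : ‖p‖ < 1) (a : 𝕜) :
    Tendsto (qPochhammer a p) atTop (𝓝 (qPochhammerInf a p)) :=
  (multipliable_one_sub_mul_pow hp a).hasProd.tendsto_prod_nat

lemma qPochhammerInf_eq_one_sub_mul (hp : ‖p‖ < 1) (a : 𝕜) :
    qPochhammerInf a p = (1 - a) * qPochhammerInf (a * p) p := by
  have tail := multipliable_one_sub_mul_pow hp (a * p)
  simp only [mul_assoc, ← pow_succ'] at tail
  rw [qPochhammerInf, tprod_eq_zero_mul' (f := fun n ↦ 1 - a * p ^ n) tail, pow_zero, mul_one]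
  simp only [qPochhammerInf, mul_assoc, ← pow_succ']

lemma qPochhammerInf_eq_zero_iff (hp : ‖p‖ < 1) (a : 𝕜) :
    qPochhammerInf a p = 0 ↔ ∃ n : ℕ, a * p ^ n = 1 := by
  refine ⟨fun h ↦ ?_, fun ⟨n, hn⟩ ↦ tprod_of_exists_eq_zero ⟨n, sub_eq_zero.mpr hn.symm⟩⟩
  contrapose! h
  simp only [qPochhammerInf, sub_eq_add_neg]
  refine tprod_one_add_ne_zero_of_summable (fun n ↦ ?_) (summable_norm_neg_mul_pow hp a)
  rw [← sub_eq_add_neg]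
  exact sub_ne_zero.mpr (h n).symm

lemma qPochhammerInf_self_ne_zero (hp : ‖p‖ < 1) : qPochhammerInf p p ≠ 0 := by
  rw [Ne, qPochhammerInf_eq_zero_iff hp]
  rintro ⟨n, hn⟩
  have : ‖p ^ (n + 1)‖ < 1 := norm_pow p _ ▸ pow_lt_one₀ (norm_nonneg p) hp n.succ_ne_zero
  rw [pow_succ', hn, norm_one] at this
  exact this.false

lemma qPochhammer_self_ne_zero (hp : ‖p‖ < 1) (n : ℕ) : qPochhammer p p n ≠ 0 := by
  refine prod_ne_zero_iff.mpr fun i _ h ↦ qPochhammerInf_self_ne_zero hp ?_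
  exact (qPochhammerInf_eq_zero_iff hp p).mpr ⟨i, (sub_eq_zero.mp h).symm⟩

lemma continuous_qPochhammerInf_left [LocallyCompactSpace 𝕜] (hp : ‖p‖ < 1) :
    Continuous fun a ↦ qPochhammerInf a p := by
  refine continuous_iff_continuousAt.mpr fun a ↦ ?_
  obtain ⟨s, hs, ha⟩ := exists_compact_mem_nhds a
  obtain ⟨C, hC⟩ := hs.isBounded.exists_norm_le
  have bound (n : ℕ) (x : 𝕜) (hx : x ∈ s) : ‖-(x * p ^ n)‖ ≤ C * ‖p‖ ^ n := by
    rw [norm_neg, norm_mul, norm_pow]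
    gcongr
    exact hC x hx
  have unif := ((summable_geometric_of_lt_one (norm_nonneg p) hp).mul_left
    C).hasProdUniformlyOn_nat_one_add hs (.of_forall bound) fun n ↦ by fun_prop
  simp only [← sub_eq_add_neg] at unif
  exact (unif.tendstoUniformlyOn.continuousOn
    (Eventually.of_forall fun t ↦ by fun_prop).frequently).continuousAt ha

end QPochhammerInf

section TripleProduct

variable {𝕜 : Type*} [NormedField 𝕜] [CompleteSpace 𝕜] {p z : 𝕜}

lemma qBinom_natCast_eq_div (hp : ‖p‖ < 1) (a b : ℕ) :
    qBinom p (a + b) a = qPochhammer p p (a + b) / (qPochhammer p p a * qPochhammer p p b) := by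
  rw [eq_div_iff (mul_ne_zero (qPochhammer_self_ne_zero hp a) (qPochhammer_self_ne_zero hp b)),
    ← mul_assoc, qBinom_mul_qPochhammer_mul_qPochhammer]

lemma tendsto_qBinom_natCast (hp : ‖p‖ < 1) :
    Tendsto (fun n : ℕ × ℕ ↦ qBinom p (n.1 + n.2) n.1) (atTop ×ˢ atTop)
      (𝓝 (qPochhammerInf p p)⁻¹) := by
  have hP := qPochhammerInf_self_ne_zero hp
  have lim := tendsto_qPochhammer hp p
  simp only [qBinom_natCast_eq_div hp]
  rw [← div_mul_cancel_left₀ hP (qPochhammerInf p p)]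
  exact (lim.comp (tendsto_fst.atTop_add_atTop tendsto_snd)).div
    ((lim.comp tendsto_fst).mul (lim.comp tendsto_snd)) (mul_ne_zero hP hP)

lemma tendsto_qBinom_add_self (hp : ‖p‖ < 1) (l : ℤ) :
    Tendsto (fun N : ℕ ↦ qBinom p (N + N) (l + N)) atTop (𝓝 (qPochhammerInf p p)⁻¹) := by
  have toNat_atTop (m : ℤ) : Tendsto (fun N : ℕ ↦ (m + N).toNat) atTop atTop :=
    tendsto_atTop.mpr fun b ↦ (eventually_ge_atTop (b + m.natAbs)).mono fun N hN ↦ by lia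
  refine ((tendsto_qBinom_natCast hp).comp
    ((toNat_atTop l).prodMk (toNat_atTop (-l)))).congr' ?_
  filter_upwards [eventually_ge_atTop l.natAbs] with N hN
  rw [Function.comp_apply, Int.toNat_of_nonneg (by lia)]
  congr 1
  lia

lemma exists_norm_qBinom_le (hp : ‖p‖ < 1) : ∃ C, ∀ n k, ‖qBinom p n k‖ ≤ C := by
  have lim := tendsto_qPochhammer hp p
  obtain ⟨A, hA⟩ := lim.norm.bddAbove_range
  obtain ⟨B, hB⟩ := (lim.inv₀ (qPochhammerInf_self_ne_zero hp)).norm.bddAbove_range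
  have hA (n : ℕ) : ‖qPochhammer p p n‖ ≤ A := hA ⟨n, rfl⟩
  have hB (n : ℕ) : ‖(qPochhammer p p n)⁻¹‖ ≤ B := hB ⟨n, rfl⟩
  have hA0 : 0 ≤ A := (norm_nonneg _).trans (hA 0)
  have hB0 : 0 ≤ B := (norm_nonneg _).trans (hB 0)
  refine ⟨A * (B * B), fun n k ↦ ?_⟩
  rcases lt_or_ge k 0 with hk | hk
  · rw [qBinom_of_neg p n hk, norm_zero]
    positivity
  rcases lt_or_ge (n : ℤ) k with hnk | hnk
  · rw [qBinom_of_lt p hnk, norm_zero]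
    positivity
  lift k to ℕ using hk
  obtain ⟨b, rfl⟩ := Nat.exists_eq_add_of_le (Int.ofNat_le.mp hnk)
  rw [qBinom_natCast_eq_div hp, div_eq_mul_inv, mul_inv, norm_mul, norm_mul]
  gcongr
  exacts [hA _, hB _, hB _]

theorem jacobi_triple_product (hp : ‖p‖ < 1) (hp0 : p ≠ 0) (hz : z ≠ 0) :
    ∑' l, thetaTerm p z l =
      qPochhammerInf p p * (qPochhammerInf (-(p * z)) p * qPochhammerInf (-z⁻¹) p) := by
  obtain ⟨C, hC⟩ := exists_norm_qBinom_le hp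
  have series : Tendsto (fun N : ℕ ↦ ∑' l : ℤ, qBinom p (N + N) (l + N) * thetaTerm p z l) atTop
      (𝓝 (∑' l, (qPochhammerInf p p)⁻¹ * thetaTerm p z l)) := by
    refine tendsto_tsum_of_dominated_convergence ((summable_norm_thetaTerm hp hp0 hz).mul_left C)
      (fun l ↦ (tendsto_qBinom_add_self hp l).mul_const _) (.of_forall fun N l ↦ ?_)
    rw [norm_mul]
    gcongr
    exact hC _ _
  have product := (tendsto_qPochhammer hp (-(p * z))).mul (tendsto_qPochhammer hp (-z⁻¹))
  simp only [(finite_jacobi_triple_product hp0 hz _ _).tsum_eq, tsum_mul_left] at series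
  rw [← tendsto_nhds_unique series product, mul_inv_cancel_left₀ (qPochhammerInf_self_ne_zero hp)]

end TripleProduct

section Theta

variable {q z : ℂ}

lemma theta_eq_tsum_thetaTerm (q z : ℂ) : theta q z = ∑' l, thetaTerm q⁻¹ z l := by
  simp only [theta, thetaTerm, inv_zpow']

lemma theta_eq_qPochhammerInf_mul (hq : 1 < ‖q‖) (hz : z ≠ 0) :
    theta q z = qPochhammerInf q⁻¹ q⁻¹ *
      (qPochhammerInf (-(q⁻¹ * z)) q⁻¹ * qPochhammerInf (-z⁻¹) q⁻¹) := by
  have hq0 : q ≠ 0 := norm_pos_iff.mp (one_pos.trans hq)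
  rw [theta_eq_tsum_thetaTerm,
    jacobi_triple_product (norm_inv q ▸ inv_lt_one_of_one_lt₀ hq) (inv_ne_zero hq0) hz]

lemma theta_eq_zero_iff (hq : 1 < ‖q‖) (hz : z ≠ 0) :
    theta q z = 0 ↔ ∃ n : ℤ, z = -q ^ n := by
  have hq0 : q ≠ 0 := norm_pos_iff.mp (one_pos.trans hq)
  have hp : ‖q⁻¹‖ < 1 := norm_inv q ▸ inv_lt_one_of_one_lt₀ hq
  have outer (n : ℕ) : -(q⁻¹ * z) * q⁻¹ ^ n = 1 ↔ z = -q ^ (n + 1 : ℤ) := by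
    rw [neg_mul, mul_right_comm, ← pow_succ', inv_pow, neg_eq_iff_eq_neg,
      inv_mul_eq_iff_eq_mul₀ (pow_ne_zero _ hq0), mul_neg_one]
    norm_cast
  have inner (n : ℕ) : -z⁻¹ * q⁻¹ ^ n = 1 ↔ z = -q ^ (-n : ℤ) := by
    rw [neg_mul, neg_eq_iff_eq_neg, inv_mul_eq_iff_eq_mul₀ hz, mul_neg_one, zpow_neg,
      zpow_natCast, inv_pow, eq_comm, neg_eq_iff_eq_neg]
  simp only [theta_eq_qPochhammerInf_mul hq hz, mul_eq_zero, qPochhammerInf_self_ne_zero hp,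
    false_or, qPochhammerInf_eq_zero_iff hp, outer, inner]
  constructor
  · rintro (⟨n, h⟩ | ⟨n, h⟩)
    exacts [⟨_, h⟩, ⟨_, h⟩]
  · rintro ⟨n, h⟩
    rcases lt_or_ge 0 n with hn | hn
    · exact .inl ⟨(n - 1).toNat, by rwa [Int.toNat_of_nonneg (by lia), sub_add_cancel]⟩
    · exact .inr ⟨(-n).toNat, by rwa [Int.toNat_of_nonneg (by lia), neg_neg]⟩

lemma theta_zpow_mul (hq : q ≠ 0) (hz : z ≠ 0) (n : ℤ) :
    theta q (q ^ n * z) = thetaTerm q⁻¹ (q ^ n * z) n * theta q z := by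
  rw [theta_eq_tsum_thetaTerm, theta_eq_tsum_thetaTerm, ← (Equiv.addRight n).tsum_eq,
    ← tsum_mul_left]
  refine tsum_congr fun l ↦ ?_
  simpa only [Equiv.coe_addRight, inv_zpow', neg_neg] using
    thetaTerm_zpow_neg_mul_add (inv_ne_zero hq) hz l n

lemma hasDerivAt_theta_neg_one (hq : 1 < ‖q‖) :
    HasDerivAt (theta q) (-qPochhammerInf q⁻¹ q⁻¹ ^ 3) (-1) := by
  have hp : ‖q⁻¹‖ < 1 := norm_inv q ▸ inv_lt_one_of_one_lt₀ hq
  set g : ℂ → ℂ := fun x ↦ x⁻¹ * (qPochhammerInf q⁻¹ q⁻¹ *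
    (qPochhammerInf (-(q⁻¹ * x)) q⁻¹ * qPochhammerInf (-x⁻¹ * q⁻¹) q⁻¹)) with hg
  have g_neg_one : g (-1) = -qPochhammerInf q⁻¹ q⁻¹ ^ 3 := by
    norm_num [hg]
    ring
  have g_cont : ContinuousAt g (-1) := by
    have inv_cont : ContinuousAt (fun x : ℂ ↦ x⁻¹) (-1) := continuousAt_inv₀ (by norm_num)
    have cont := continuous_qPochhammerInf_left hp
    exact inv_cont.mul (continuousAt_const.mul ((by fun_prop : ContinuousAt _ _).mul
      (cont.continuousAt.comp (inv_cont.neg.mul_const q⁻¹))))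
  rw [← g_neg_one]
  refine (hasDerivAt_sub_mul_of_continuousAt g_cont).congr_of_eventuallyEq ?_
  filter_upwards [isOpen_ne.mem_nhds (neg_ne_zero.mpr one_ne_zero)] with x hx
  rw [theta_eq_qPochhammerInf_mul hq hx, qPochhammerInf_eq_one_sub_mul hp (-x⁻¹), hg]
  field_simp [show x ≠ 0 from hx]

lemma deriv_theta_neg_zpow_ne_zero (hq : 1 < ‖q‖) (n : ℤ) : deriv (theta q) (-q ^ n) ≠ 0 := by
  have hq0 : q ≠ 0 := norm_pos_iff.mp (one_pos.trans hq)
  have hp : ‖q⁻¹‖ < 1 := norm_inv q ▸ inv_lt_one_of_one_lt₀ hq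
  have hzero : theta q (-1) = 0 := (theta_eq_zero_iff hq (by norm_num)).mpr ⟨0, by simp⟩
  have quasi : (fun z ↦ theta q (q ^ n * z)) =ᶠ[𝓝 (-1)]
      fun z ↦ thetaTerm q⁻¹ (q ^ n * z) n * theta q z := by
    filter_upwards [isOpen_ne.mem_nhds (neg_ne_zero.mpr one_ne_zero)] with z hz
    exact theta_zpow_mul hq0 hz n
  have factor_diff : DifferentiableAt ℂ (fun z ↦ thetaTerm q⁻¹ (q ^ n * z) n) (-1) := by
    simp only [thetaTerm_mul_right]
    exact ((differentiableAt_zpow.mpr (.inl (by norm_num))).const_mul _).const_mul _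
  have deriv_eq : q ^ n * deriv (theta q) (-q ^ n) =
      thetaTerm q⁻¹ (q ^ n * -1) n * -qPochhammerInf q⁻¹ q⁻¹ ^ 3 := by
    have theta_deriv := hasDerivAt_theta_neg_one hq
    rw [← mul_neg_one (q ^ n), ← smul_eq_mul, ← deriv_comp_mul_left, quasi.deriv_eq,
      deriv_fun_mul factor_diff theta_deriv.differentiableAt, hzero, mul_zero, zero_add,
      theta_deriv.deriv]
  refine right_ne_zero_of_mul (deriv_eq.trans_ne (mul_ne_zero ?_ ?_))
  · exact thetaTerm_ne_zero (inv_ne_zero hq0) (mul_ne_zero (zpow_ne_zero n hq0) (by norm_num)) n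
  · exact neg_ne_zero.mpr (pow_ne_zero 3 (qPochhammerInf_self_ne_zero hp))

end Theta

/-- for `|q| > 1`, the zero set of `Θ_q` in `ℂ*` is exactly the discrete
`q`-spiral `-q^ℤ`, and every zero is simple. -/
theorem theta_zeros (q : ℂ) (hq : 1 < ‖q‖) :
    (∀ z : ℂ, z ≠ 0 → (theta q z = 0 ↔ ∃ n : ℤ, z = -q ^ n)) ∧
    (∀ n : ℤ, deriv (theta q) (-q ^ n) ≠ 0) :=
  ⟨fun _ hz ↦ theta_eq_zero_iff hq hz, deriv_theta_neg_zpow_ne_zero hq⟩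
end

section
/- Let (μ,K) ∈ ℚ_{>0} × ℕ* with K ∈ μℕ*, λ ∈ ℂ*, and let g ∈ ℍ^{[λ]}_{μ,K}. Then the function ζ·g(ζ) also belongs to ℍ^{[λ]}_{μ,K}, and the q-Laplace transform satisfies L^{[λ]}_{μ,K}(ζ g)(z) = z · L^{[λ]}_{μ,K}(g)(q^{1/μ} z) for every z ∈ ℂ* near 0 with z, q^{1/μ}z ∉ −λq^{K^{−1}ℤ}. -/
/-- The real theta function `Θ_Q(x) = ∑_{ℓ ∈ ℤ} Q^{-ℓ(ℓ+1)/2} x^ℓ` for real `Q, x`;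
for `Q > 1` and `x > 0` it is a positive real number. -/
noncomputable def thetaR (Q x : ℝ) : ℝ := ∑' ℓ : ℤ, Q ^ (-(ℓ * (ℓ + 1) / 2)) * x ^ ℓ

/-- Rational powers `q^α := exp(α log q)` of a complex number, via the principal logarithm. -/
noncomputable def qpow (q : ℂ) (α : ℚ) : ℂ := Complex.exp ((α : ℂ) * Complex.log q)

/-- Rational (real) powers `b^α` for a real base. -/
noncomputable def qpowR (b : ℝ) (α : ℚ) : ℝ := b ^ (α : ℝ)

/-- The `ε`-neighborhood of the discrete `q^{1/K}`-spiral `λ q^{K⁻¹ℤ}` in `ℂ*`: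
`∪_{ℓ∈K⁻¹ℤ} {z ∈ ℂ* : |z - q^ℓ λ| < ε |q^ℓ λ|}`. -/
def spiralNhd (q lam : ℂ) (K : ℕ) (ε : ℝ) : Set ℂ :=
  {z : ℂ | z ≠ 0 ∧ ∃ j : ℤ,
    ‖z - qpow q ((j : ℚ) / K) * lam‖ < ε * ‖qpow q ((j : ℚ) / K) * lam‖}

/-- Membership in the space `ℍ^{[λ]}_{μ,K}`: `f` is meromorphic on a punctured
neighborhood of `0` in `ℂ*` and can be continued analytically to a connected domain `Ω`
containing an `ε`-neighborhood of the spiral `λ q^{K⁻¹ℤ}`, with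
`q^{1/μ}`-exponential growth of order 1 at infinity:
`|f(z)| < L·Θ_{|q|^{1/μ}}(M|z|)` on `Ω`. -/
def memH (q : ℂ) (μ : ℚ) (K : ℕ) (lam : ℂ) (f : ℂ → ℂ) : Prop :=
  (∃ r > 0, MeromorphicOn f {z : ℂ | z ≠ 0 ∧ ‖z‖ < r}) ∧
  ∃ ε > 0, ∃ Ω : Set ℂ, IsOpen Ω ∧ IsConnected Ω ∧ spiralNhd q lam K ε ⊆ Ω ∧
    AnalyticOnNhd ℂ f Ω ∧
    ∃ L > 0, ∃ M > 0, ∀ z ∈ Ω, ‖f z‖ < L * thetaR (qpowR ‖q‖ (1 / μ)) (M * ‖z‖)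

/-- The `q`-Laplace transform of order `μ` in the direction `λ`:
`L^{[λ]}_{μ,K}(f)(z) = (μ/K) ∑_{ℓ∈K⁻¹ℤ} f(q^ℓ λ) / Θ_{q^{1/μ}}(q^{1/μ+ℓ} λ / z)`. -/
noncomputable def qLaplace (q : ℂ) (μ : ℚ) (K : ℕ) (lam : ℂ) (f : ℂ → ℂ) (z : ℂ) : ℂ :=
  ((μ : ℂ) / (K : ℂ)) * ∑' j : ℤ, f (qpow q ((j : ℚ) / K) * lam) /
    theta (qpow q (1 / μ)) (qpow q (1 / μ + (j : ℚ) / K) * lam / z)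

/-!
Shifting the index of summation gives the functional equation `Θ_q(q x) = x Θ_q(x)`. Applied to
`q^{1/μ}` at `x = q^ℓ λ / z`, it identifies the two `q`-Laplace series term by term. Applied to
`|q|^{1/μ}` at `x = M |z|`, it absorbs the extra factor `|z|` into the growth bound, at the price
of replacing `(L, M)` by `(L / M, |q|^{1/μ} M)`.
-/

theorem neg_mul_add_one_ediv_two_succ (l : ℤ) :
    -((l + 1) * (l + 1 + 1) / 2) = -(l * (l + 1) / 2) - (l + 1) := by
  rw [show (l + 1) * (l + 1 + 1) = l * (l + 1) + (l + 1) * 2 by ring,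
    Int.add_mul_ediv_right _ _ two_ne_zero]
  ring

theorem tsum_theta_mul_left {F : Type*} [Field F] [TopologicalSpace F] [IsTopologicalSemiring F]
    [T2Space F] {q x : F} (hq : q ≠ 0) (hx : x ≠ 0) :
    ∑' l : ℤ, q ^ (-(l * (l + 1) / 2)) * (q * x) ^ l =
      x * ∑' l : ℤ, q ^ (-(l * (l + 1) / 2)) * x ^ l := by
  rw [← tsum_mul_left, ← (Equiv.addRight (1 : ℤ)).tsum_eq]
  refine tsum_congr fun l => ?_
  have hql : q ^ (l + 1) ≠ 0 := zpow_ne_zero _ hq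
  rw [Equiv.coe_addRight, neg_mul_add_one_ediv_two_succ, zpow_sub₀ hq, mul_zpow,
    zpow_add_one₀ hx]
  field_simp

theorem theta_mul_left {q x : ℂ} (hq : q ≠ 0) (hx : x ≠ 0) :
    theta q (q * x) = x * theta q x :=
  tsum_theta_mul_left hq hx

theorem thetaR_mul_left {Q x : ℝ} (hQ : Q ≠ 0) (hx : x ≠ 0) :
    thetaR Q (Q * x) = x * thetaR Q x :=
  tsum_theta_mul_left hQ hx

theorem thetaR_zero_right (Q : ℝ) : thetaR Q 0 = 1 := by
  rw [thetaR, tsum_eq_single 0 fun l hl => by rw [zero_zpow l hl, mul_zero]]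
  simp

theorem mul_lt_div_mul_thetaR {Q L M x y : ℝ} (hQ : Q ≠ 0) (hL : 0 < L) (hM : 0 < M)
    (hx : 0 ≤ x) (hy : y < L * thetaR Q (M * x)) :
    x * y < L / M * thetaR Q (Q * M * x) := by
  rcases hx.eq_or_lt with rfl | hx
  · rw [zero_mul, mul_zero, thetaR_zero_right, mul_one]
    exact div_pos hL hM
  · calc
      x * y < x * (L * thetaR Q (M * x)) := mul_lt_mul_of_pos_left hy hx
      _ = L / M * (M * x * thetaR Q (M * x)) := by field_simp
      _ = L / M * thetaR Q (Q * M * x) := by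
        rw [mul_assoc Q, thetaR_mul_left hQ (mul_pos hM hx).ne']

theorem qpow_add (q : ℂ) (a b : ℚ) : qpow q (a + b) = qpow q a * qpow q b := by
  simp only [qpow, Rat.cast_add, add_mul, Complex.exp_add]

theorem qpow_ne_zero (q : ℂ) (a : ℚ) : qpow q a ≠ 0 := Complex.exp_ne_zero _

theorem qpowR_pos {b : ℝ} (hb : 0 < b) (a : ℚ) : 0 < qpowR b a := Real.rpow_pos_of_pos hb _

theorem memH.id_mul {q : ℂ} {μ : ℚ} {K : ℕ} {lam : ℂ} {g : ℂ → ℂ} (hq : q ≠ 0)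
    (hg : memH q μ K lam g) : memH q μ K lam (fun ζ => ζ * g ζ) := by
  obtain ⟨⟨r, hr, hmer⟩, ε, hε, Ω, hopen, hconn, hspiral, hana, L, hL, M, hM, hbound⟩ := hg
  have hQ : 0 < qpowR ‖q‖ (1 / μ) := qpowR_pos (norm_pos_iff.mpr hq) _
  refine ⟨⟨r, hr, fun z hz => (MeromorphicAt.id z).mul (hmer z hz)⟩, ε, hε, Ω, hopen, hconn,
    hspiral, fun z hz => analyticAt_id.mul (hana z hz), L / M, div_pos hL hM,
    qpowR ‖q‖ (1 / μ) * M, mul_pos hQ hM, fun z hz => ?_⟩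
  rw [norm_mul]
  exact mul_lt_div_mul_thetaR hQ.ne' hL hM (norm_nonneg z) (hbound z hz)

theorem mul_div_theta_mul_left {Q w z : ℂ} (hQ : Q ≠ 0) (hw : w ≠ 0) (hz : z ≠ 0) (c : ℂ) :
    w * c / theta Q (Q * w / z) = z * (c / theta Q (Q * w / (Q * z))) := by
  have hwz : w / z ≠ 0 := div_ne_zero hw hz
  calc
    w * c / theta Q (Q * w / z) = w / z * (z * c) / (w / z * theta Q (w / z)) := by
      rw [mul_div_assoc Q, theta_mul_left hQ hwz, ← mul_assoc (w / z), div_mul_cancel₀ w hz]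
    _ = z * (c / theta Q (Q * w / (Q * z))) := by
      rw [mul_div_mul_left _ _ hwz, mul_div_assoc, mul_div_mul_left _ _ hQ]

theorem qLaplace_id_mul (q : ℂ) (μ : ℚ) (K : ℕ) {lam z : ℂ} (hlam : lam ≠ 0) (hz : z ≠ 0)
    (g : ℂ → ℂ) :
    qLaplace q μ K lam (fun ζ => ζ * g ζ) z = z * qLaplace q μ K lam g (qpow q (1 / μ) * z) := by
  rw [qLaplace, qLaplace, mul_left_comm z, ← tsum_mul_left (a := z)]
  congr 1
  refine tsum_congr fun j => ?_
  rw [qpow_add, mul_assoc (qpow q (1 / μ))]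
  exact mul_div_theta_mul_left (qpow_ne_zero q _) (mul_ne_zero (qpow_ne_zero q _) hlam) hz _

theorem qLaplace_mul_zeta_general {q : ℂ} (hq : 1 < ‖q‖) {μ : ℚ} (_ : 0 < μ) {K : ℕ} (_ : 0 < K)
    {lam : ℂ} (hlam : lam ≠ 0) {g : ℂ → ℂ} (hg : memH q μ K lam g) :
    memH q μ K lam (fun ζ => ζ * g ζ) ∧
    ∀ z : ℂ, z ≠ 0 →
      (∀ j : ℤ, z ≠ -(qpow q ((j : ℚ) / K) * lam)) →
      (∀ j : ℤ, qpow q (1 / μ) * z ≠ -(qpow q ((j : ℚ) / K) * lam)) →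
      qLaplace q μ K lam (fun ζ => ζ * g ζ) z
        = z * qLaplace q μ K lam g (qpow q (1 / μ) * z) :=
  ⟨hg.id_mul (norm_pos_iff.mp (one_pos.trans hq)), fun _ hz _ _ => qLaplace_id_mul q μ K hlam hz g⟩

/-- if `g ∈ ℍ^{[λ]}_{μ,K}` then `ζ·g(ζ) ∈ ℍ^{[λ]}_{μ,K}` and
`L^{[λ]}_{μ,K}(ζg)(z) = z · L^{[λ]}_{μ,K}(g)(q^{1/μ} z)` for `z ∈ ℂ*` near `0`
off the spirals. -/
theorem qLaplace_mul_zeta (q : ℂ) (hq : 1 < ‖q‖) (μ : ℚ) (hμ : 0 < μ) (K : ℕ) (hK : 0 < K)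
    (hKμ : ∃ m : ℕ, 0 < m ∧ (K : ℚ) = μ * m) (lam : ℂ) (hlam : lam ≠ 0)
    (g : ℂ → ℂ) (hg : memH q μ K lam g) :
    memH q μ K lam (fun ζ => ζ * g ζ) ∧
    ∃ r > 0, ∀ z : ℂ, z ≠ 0 → ‖z‖ < r →
      (∀ j : ℤ, z ≠ -(qpow q ((j : ℚ) / K) * lam)) →
      (∀ j : ℤ, qpow q (1 / μ) * z ≠ -(qpow q ((j : ℚ) / K) * lam)) →
      qLaplace q μ K lam (fun ζ => ζ * g ζ) z
        = z * qLaplace q μ K lam g (qpow q (1 / μ) * z) := by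
  obtain ⟨hmem, heq⟩ := qLaplace_mul_zeta_general hq hμ hK hlam hg
  exact ⟨hmem, 1, one_pos, fun z hz _ => heq z hz⟩
end
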